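/- For nonempty sets $X \subseteq \mathbb{R}^m$, $Y \subseteq \mathbb{R}^n$ and a function $h : \mathbb{R}^m \to \mathbb{R}$, write $X \trianglelefteq^h Y := \{(x, h(x)\,y) : x \in X,\ y \in Y\} \subseteq \mathbb{R}^m \times \mathbb{R}^n$ (the scaled extension of $X$ with $Y$ via $h$). Let $X \subseteq \mathbb{R}^m$ and $Y \subseteq \mathbb{R}^n$ be nonempty compact sets, let $h : \mathbb{R}^m \to \mathbb{R}$ be given by $h(x) = \langle a, x\rangle + b$ with $h(x) \ge 0$ for all $x \in X$, and let $Z = X \trianglelefteq^h Y$. Fix $T \ge 1$, points $x^1,\dots,x^T \in X$ and $y^1,\dots,y^T \in Y$, and loss vectors $\ell_x^1,\dots,\ell_x^T \in \mathbb{R}^m$ and $\ell_y^1,\dots,\ell_y^T \in \mathbb{R}^n$. Define the modified losses $\tilde\ell_x^t := \ell_x^t + \langle \ell_y^t, y^t\rangle\, a$, the points $z^t := (x^t, h(x^t)\, y^t)$, the cumulative regrets $$R_X^T := \sum_{t=1}^T \langle \tilde\ell_x^t, x^t\rangle - \min_{\hat x \in X} \sum_{t=1}^T \langle \tilde\ell_x^t,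 \hat x\rangle, \qquad R_Y^T := \sum_{t=1}^T \langle \ell_y^t, y^t\rangle - \min_{\hat y \in Y} \sum_{t=1}^T \langle \ell_y^t, \hat y\rangle,$$ $$R_Z^T := \sum_{t=1}^T \langle (\ell_x^t, \ell_y^t), z^t\rangle - \min_{\hat z \in Z} \sum_{t=1}^T \langle (\ell_x^t, \ell_y^t), \hat z\rangle,$$ and $h^* := \max_{x \in X} h(x)$. Then $z^t \in Z$ for every $t$, and $$R_Z^T \le R_X^T + \max_{\hat x \in X} \{ h(\hat x)\, R_Y^T \}.$$ In particular, if $R_Y^T \ge 0$, then $$R_Z^T \le R_X^T + h^* R_Y^T.$$ -/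

import Mathlib

/-- The scaled extension of `X ⊆ ℝ^m` with `Y ⊆ ℝ^n` via `h : ℝ^m → ℝ`,
namely `X ⊴^h Y = {(x, h(x) • y) : x ∈ X, y ∈ Y}`. -/
def scaledExt {m n : ℕ} (X : Set (Fin m → ℝ)) (Y : Set (Fin n → ℝ))
    (h : (Fin m → ℝ) → ℝ) : Set ((Fin m → ℝ) × (Fin n → ℝ)) :=
  {p | ∃ x ∈ X, ∃ y ∈ Y, p = (x, h x • y)}

/-- The Euclidean inner product on `ℝ^m × ℝ^n`:
`⟨(u, v), (x, y)⟩ = ⟨u, x⟩ + ⟨v, y⟩`. -/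
def prodDot {m n : ℕ} (l z : (Fin m → ℝ) × (Fin n → ℝ)) : ℝ :=
  dotProduct l.1 z.1 + dotProduct l.2 z.2

/-- The cumulative regret of the decisions `z^1, …, z^T` against the linear losses
`l^1, …, l^T` over the set `S`, with respect to the inner product `ip`:
`∑_t ⟨l^t, z^t⟩ - min_{ẑ ∈ S} ∑_t ⟨l^t, ẑ⟩`.
The minimum is written as an infimum; it is attained when `S` is nonempty and compact
and `ip` is continuous. -/
noncomputable def cumRegret {E : Type*} (ip : E → E → ℝ) (S : Set E) {T : ℕ}
    (l z : Fin T → E) : ℝ :=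
  (∑ t, ip (l t) (z t)) - sInf ((fun zhat => ∑ t, ip (l t) zhat) '' S)

/-! Against a comparator `(u, h(u) v)`, the loss of `(x, h(x) y)` on the `Y` component splits as
`h(x) ⟨ℓ, y⟩ - h(u) ⟨ℓ, v⟩ = (h(x) - h(u)) ⟨ℓ, y⟩ + h(u) (⟨ℓ, y⟩ - ⟨ℓ, v⟩)`. As `h` is affine, the
first term is linear in `x - u` and is absorbed into the modified losses, while the second is `h(u)`
times a regret over `Y`. Since `h(u) ≥ 0`, both parts can be bounded by the cumulative regrets. -/

section ComparatorRegret

variable {E : Type*} {T : ℕ} {ip : E → E → ℝ} {S : Set E} {l z : Fin T → E}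

/-- The regret of the decisions `z^1, …, z^T` against the single fixed comparator `u`; the
cumulative regret over `S` is its supremum over `u ∈ S`. -/
def comparatorRegret (ip : E → E → ℝ) (l z : Fin T → E) (u : E) : ℝ :=
  (∑ t, ip (l t) (z t)) - ∑ t, ip (l t) u

theorem comparatorRegret_le_cumRegret (hS : BddBelow ((fun u => ∑ t, ip (l t) u) '' S))
    {u : E} (hu : u ∈ S) : comparatorRegret ip l z u ≤ cumRegret ip S l z :=
  sub_le_sub_left (csInf_le hS (Set.mem_image_of_mem _ hu)) _

theorem cumRegret_le_of_forall_comparatorRegret_le (hS : S.Nonempty) {c : ℝ}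
    (hc : ∀ u ∈ S, comparatorRegret ip l z u ≤ c) : cumRegret ip S l z ≤ c :=
  sub_le_comm.1 <| le_csInf (hS.image _) <| Set.forall_mem_image.2 fun u hu =>
    sub_le_comm.1 (hc u hu)

end ComparatorRegret

section ScaledExtension

variable {E F : Type*} [SMul ℝ F] {X : Set E} {Y : Set F} {h : E → ℝ}

/-- The scaled extension of `X` with `Y` via `h` in arbitrary spaces; on coordinate spaces
it unfolds to `scaledExt`. -/
def scaledExtension (X : Set E) (Y : Set F) (h : E → ℝ) : Set (E × F) :=
  {p | ∃ x ∈ X, ∃ y ∈ Y, p = (x, h x • y)}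

theorem scaledExtension_nonempty (hX : X.Nonempty) (hY : Y.Nonempty) :
    (scaledExtension X Y h).Nonempty :=
  let ⟨x, hx⟩ := hX
  let ⟨y, hy⟩ := hY
  ⟨_, x, hx, y, hy, rfl⟩

end ScaledExtension

section RegretBound

open LinearMap (BilinForm)

variable {E F : Type*} [AddCommGroup E] [Module ℝ E] [AddCommGroup F] [Module ℝ F]

/-- The pairing on `E × F` induced by bilinear forms on the factors, generalizing `prodDot`. It is
a plain function because that is what `cumRegret` takes. -/
def prodPairing (B : BilinForm ℝ E) (C : BilinForm ℝ F) (l z : E × F) : ℝ :=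
  B l.1 z.1 + C l.2 z.2

variable {T : ℕ} {B : BilinForm ℝ E} {C : BilinForm ℝ F} {X : Set E} {Y : Set F}
  {a : E} {b : ℝ} {h : E → ℝ} {x lx : Fin T → E} {y ly : Fin T → F}

/-- The modified losses `ℓ̃_x^t = ℓ_x^t + ⟨ℓ_y^t, y^t⟩ a`, which charge the `X` side for the loss
that the scaling factor, with linear part `a`, passes on to the `Y` side. -/
def modifiedLoss (C : BilinForm ℝ F) (a : E) (lx : Fin T → E) (ly y : Fin T → F) : Fin T → E :=
  fun t => lx t + C (ly t) (y t) • a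

theorem comparatorRegret_prodPairing (hh : ∀ u, h u = B a u + b) (u : E) (v : F) :
    comparatorRegret (prodPairing B C) (fun t => (lx t, ly t)) (fun t => (x t, h (x t) • y t))
        (u, h u • v) =
      comparatorRegret (B · ·) (modifiedLoss C a lx ly y) x u +
        h u * comparatorRegret (C · ·) ly y v := by
  simp only [comparatorRegret, ← Finset.sum_sub_distrib, Finset.mul_sum, ← Finset.sum_add_distrib]
  refine Finset.sum_congr rfl fun t _ => ?_
  simp only [prodPairing, modifiedLoss, map_add, map_smul, LinearMap.add_apply,
    LinearMap.smul_apply, smul_eq_mul, hh]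
  ring

theorem cumRegret_scaledExtension_le (hX : X.Nonempty) (hY : Y.Nonempty)
    (hXbdd : BddBelow ((fun u => ∑ t, B (modifiedLoss C a lx ly y t) u) '' X))
    (hYbdd : BddBelow ((fun v => ∑ t, C (ly t) v) '' Y))
    (hh : ∀ u, h u = B a u + b) (hnn : ∀ u ∈ X, 0 ≤ h u) {M : ℝ}
    (hM : ∀ u ∈ X, h u * cumRegret (C · ·) Y ly y ≤ M) :
    cumRegret (prodPairing B C) (scaledExtension X Y h) (fun t => (lx t, ly t))
        (fun t => (x t, h (x t) • y t)) ≤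
      cumRegret (B · ·) X (modifiedLoss C a lx ly y) x + M := by
  refine cumRegret_le_of_forall_comparatorRegret_le (scaledExtension_nonempty hX hY) ?_
  rintro _ ⟨u, hu, v, hv, rfl⟩
  calc
    _ = comparatorRegret (B · ·) (modifiedLoss C a lx ly y) x u +
          h u * comparatorRegret (C · ·) ly y v := comparatorRegret_prodPairing hh u v
    _ ≤ cumRegret (B · ·) X (modifiedLoss C a lx ly y) x +
          h u * cumRegret (C · ·) Y ly y := by
      gcongr
      · exact comparatorRegret_le_cumRegret hXbdd hu
      · exact hnn u hu
      · exact comparatorRegret_le_cumRegret hYbdd hv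
    _ ≤ cumRegret (B · ·) X (modifiedLoss C a lx ly y) x + M := by
      gcongr
      exact hM u hu

theorem regret_scaledExt_bound_general [TopologicalSpace E] (hB : ∀ l, Continuous (B l))
    (hXne : X.Nonempty) (hXc : IsCompact X) (hYne : Y.Nonempty)
    (hYbdd : BddBelow ((fun v => ∑ t, C (ly t) v) '' Y))
    (hh : ∀ u, h u = B a u + b) (hnn : ∀ u ∈ X, 0 ≤ h u)
    (hx : ∀ t, x t ∈ X) (hy : ∀ t, y t ∈ Y)
    {hstar : ℝ} (hhstar : IsGreatest (h '' X) hstar) :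
    let z := fun t => (x t, h (x t) • y t)
    let RX := cumRegret (B · ·) X (modifiedLoss C a lx ly y) x
    let RY := cumRegret (C · ·) Y ly y
    let RZ := cumRegret (prodPairing B C) (scaledExtension X Y h) (fun t => (lx t, ly t)) z
    (∀ t, z t ∈ scaledExtension X Y h) ∧
    (∃ M : ℝ, IsGreatest ((fun u => h u * RY) '' X) M ∧ RZ ≤ RX + M) ∧
    (0 ≤ RY → RZ ≤ RX + hstar * RY) := by
  intro z RX RY RZ
  have hXbdd : BddBelow ((fun u => ∑ t, B (modifiedLoss C a lx ly y t) u) '' X) :=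
    (hXc.image (continuous_finsetSum _ fun t _ => hB _)).bddBelow
  have hRZ {M : ℝ} (hM : ∀ u ∈ X, h u * RY ≤ M) : RZ ≤ RX + M :=
    cumRegret_scaledExtension_le hXne hYne hXbdd hYbdd hh hnn hM
  have hcont : Continuous h := funext hh ▸ (hB a).add_const b
  obtain ⟨M, hM⟩ := (hXc.image (hcont.mul_const RY)).exists_isGreatest (hXne.image _)
  exact ⟨fun t => ⟨x t, hx t, y t, hy t, rfl⟩,
    ⟨M, hM, hRZ fun u hu => hM.2 (Set.mem_image_of_mem _ hu)⟩,
    fun hRY => hRZ fun u hu =>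
      mul_le_mul_of_nonneg_right (hhstar.2 (Set.mem_image_of_mem _ hu)) hRY⟩

end RegretBound

theorem continuous_dotProductBilin {ι R : Type*} [Fintype ι] [CommSemiring R] [TopologicalSpace R]
    [IsTopologicalSemiring R] (l : ι → R) : Continuous (dotProductBilin R R l) :=
  continuous_const.dotProduct continuous_id

theorem regret_scaledExt_bound {m n : ℕ}
    (X : Set (Fin m → ℝ)) (Y : Set (Fin n → ℝ))
    (hXne : X.Nonempty) (hXc : IsCompact X)
    (hYne : Y.Nonempty) (hYc : IsCompact Y)
    (a : Fin m → ℝ) (b : ℝ) (h : (Fin m → ℝ) → ℝ)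
    (hdef : ∀ x, h x = dotProduct a x + b)
    (hnn : ∀ x ∈ X, 0 ≤ h x)
    (T : ℕ) (hT : 1 ≤ T)
    (x : Fin T → Fin m → ℝ) (y : Fin T → Fin n → ℝ)
    (hx : ∀ t, x t ∈ X) (hy : ∀ t, y t ∈ Y)
    (lx : Fin T → Fin m → ℝ) (ly : Fin T → Fin n → ℝ)
    -- modified losses, observed on the `X` side
    (ltx : Fin T → Fin m → ℝ)
    (hltx : ∀ t, ltx t = lx t + dotProduct (ly t) (y t) • a)
    -- decisions over the scaled extension
    (z : Fin T → (Fin m → ℝ) × (Fin n → ℝ))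
    (hz : ∀ t, z t = (x t, h (x t) • y t))
    -- cumulative regrets
    (RX RY RZ : ℝ)
    (hRX : RX = cumRegret dotProduct X ltx x)
    (hRY : RY = cumRegret dotProduct Y ly y)
    (hRZ : RZ = cumRegret prodDot (scaledExt X Y h) (fun t => (lx t, ly t)) z)
    -- `h* = max_{x ∈ X} h(x)`
    (hstar : ℝ) (hhstar : IsGreatest (h '' X) hstar) :
    (∀ t, z t ∈ scaledExt X Y h) ∧
    (∃ M : ℝ, IsGreatest ((fun xhat => h xhat * RY) '' X) M ∧ RZ ≤ RX + M) ∧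
    (0 ≤ RY → RZ ≤ RX + hstar * RY) := by
  rw [hRX, hRY, hRZ, funext hltx, funext hz]
  exact regret_scaledExt_bound_general (B := dotProductBilin ℝ ℝ) (C := dotProductBilin ℝ ℝ)
    continuous_dotProductBilin hXne hXc hYne
    (hYc.image (continuous_finsetSum _ fun _ _ => continuous_dotProductBilin _)).bddBelow
    hdef hnn hx hy hhstar
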